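/- Define i_m := −⌊m/2⌋ for each m ∈ ℕ. Then for every n ∈ ℕ, the σ-algebra on A^ℤ generated by the countable family of functions { ω ↦ (τ^m ω)(i_m) : m ≥ n } equals the σ-algebra comap of τ^n, i.e. the σ-algebra generated by the single map ω ↦ τ^n ω (with the Borel σ-algebra on the target A^ℤ). -/

import Mathlib

open MeasureTheory

/-- The cellular automaton `τ` defined by `(τ x)(i) = x(i) + x(i+1)`. -/
def tau {A : Type*} [Add A] (x : ℤ → A) : ℤ → A := fun i => x i + x (i + 1)

/-! In `τ^(m+1) ω i = τ^m ω i + τ^m ω (i + 1)`, the sum together with either summand determines the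
other summand by a measurable group operation. Knowing the cell `(m, c m)` at every time `m` from
`n` to `M` therefore yields, by descending induction on `m`, all the cells at time `m` between `c M`
and `c M + M - m`: one cell of this interval is given, and the cells at time `m + 1`, known by
induction, carry the information from each cell to its neighbours. When the intervals
`[c M, c M + M]` increase to `ℤ`, as they do for `c m = -⌊m/2⌋`, the whole configuration `τ^n ω` is
recovered. -/

open Set

theorem iff_of_forall_mem_Ico_iff_succ {α : Type*} [LinearOrder α] [SuccOrder α]
    [IsSuccArchimedean α] {Q : α → Prop} {a b i j : α}
    (hQ : ∀ k ∈ Ico a b, (Q k ↔ Q (Order.succ k))) (hi : i ∈ Icc a b) (hj : j ∈ Icc a b) :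
    Q i ↔ Q j := by
  have chain : Relation.ReflTransGen (fun k l => (Q k ↔ Q l)) i j :=
    reflTransGen_of_succ _
      (fun k hk => hQ k ⟨hi.1.trans hk.1, hk.2.trans_le hj.2⟩)
      (fun k hk => (hQ k ⟨hj.1.trans hk.1, hk.2.trans_le hi.2⟩).symm)
  clear hi hj
  induction chain using Relation.ReflTransGen.trans_induction_on with
  | refl => rfl
  | single h => exact h
  | trans _ _ h₁ h₂ => exact h₁.trans h₂

/-- A choice of one site `c m` for each time `m` such that the intervals `[c m, c m + m]` increase
to `ℤ`. Observing a configuration along such a path is enough to reconstruct it. Monotonicity of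
the intervals encodes that each step of the path is either `0` or `-1`. -/
structure IsExhaustingPath (c : ℕ → ℤ) : Prop where
  monotone : Monotone fun m => Icc (c m) (c m + m)
  iUnion_eq_univ : ⋃ m, Icc (c m) (c m + m) = univ

namespace IsExhaustingPath

variable {c : ℕ → ℤ}

theorem mem_Icc (hc : IsExhaustingPath c) {m M : ℕ} (hmM : m ≤ M) :
    c m ∈ Icc (c M) (c M + (M - m)) := by
  obtain ⟨left, right⟩ := (Icc_subset_Icc_iff (by lia)).1 (hc.monotone hmM)
  exact ⟨left, by lia⟩

theorem exists_mem_Icc (hc : IsExhaustingPath c) (n : ℕ) (i : ℤ) :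
    ∃ M ≥ n, i ∈ Icc (c M) (c M + (M - n)) := by
  obtain ⟨k, hk⟩ := mem_iUnion.1 (hc.iUnion_eq_univ ▸ mem_univ i)
  obtain ⟨l, hl⟩ := mem_iUnion.1 (hc.iUnion_eq_univ ▸ mem_univ (i + n))
  let M := max n (max k l)
  have left : i ∈ Icc (c M) (c M + M) := hc.monotone (by lia) hk
  have right : i + n ∈ Icc (c M) (c M + M) := hc.monotone (by lia) hl
  exact ⟨M, le_max_left _ _, left.1, by linarith [right.2]⟩

variable {P : ℕ → ℤ → Prop} {n : ℕ}

theorem forall_mem_Icc (hc : IsExhaustingPath c) (hP : ∀ m ≥ n, P m (c m))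
    (hstep : ∀ m i, P (m + 1) i → (P m i ↔ P m (i + 1))) {M : ℕ} (hnM : n ≤ M) :
    ∀ i ∈ Icc (c M) (c M + (M - n)), P n i := by
  refine Nat.decreasingInduction' (P := fun m => ∀ i ∈ Icc (c M) (c M + (M - m)), P m i)
    (fun m hmM hnm ih i hi => ?_) hnM (fun i hi => ?_)
  · have neighbours : ∀ j ∈ Ico (c M) (c M + (M - m)), (P m j ↔ P m (j + 1)) :=
      fun j hj => hstep m j (ih j ⟨hj.1, by have := hj.2; push_cast; lia⟩)
    exact (iff_of_forall_mem_Ico_iff_succ neighbours (hc.mem_Icc hmM.le) hi).1 (hP m hnm)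
  · obtain rfl : i = c M := by simpa using hi
    exact hP M hnM

theorem forall_site (hc : IsExhaustingPath c) (hP : ∀ m ≥ n, P m (c m))
    (hstep : ∀ m i, P (m + 1) i → (P m i ↔ P m (i + 1))) (i : ℤ) : P n i := by
  obtain ⟨M, hnM, hi⟩ := hc.exists_mem_Icc n i
  exact hc.forall_mem_Icc hP hstep hnM i hi

end IsExhaustingPath

theorem isExhaustingPath_neg_half : IsExhaustingPath fun m => -((m : ℤ) / 2) where
  monotone _ _ _ := Icc_subset_Icc (by lia) (by lia)
  iUnion_eq_univ := iUnion_eq_univ_iff.2 fun i => ⟨2 * i.natAbs, by lia, by lia⟩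

theorem measurable_iff_of_measurable_add {Ω G : Type*} [MeasurableSpace Ω] [AddGroup G]
    [MeasurableSpace G] [MeasurableAdd₂ G] [MeasurableNeg G] {f g : Ω → G}
    (hfg : Measurable (f + g)) : Measurable f ↔ Measurable g where
  mp hf := by simpa only [neg_add_cancel_left] using hf.neg.add hfg
  mpr hg := by simpa only [add_neg_cancel_right] using hfg.add hg.neg

theorem antitone_comap_iterate_of_measurable {X : Type*} [mX : MeasurableSpace X] {T : X → X}
    (hT : Measurable T) : Antitone fun n => mX.comap T^[n] := by
  refine antitone_nat_of_succ_le fun n => ?_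
  rw [Function.iterate_succ', ← MeasurableSpace.comap_comp]
  exact MeasurableSpace.comap_mono hT.comap_le

theorem tau_iterate_succ_apply {A : Type*} [Add A] (m : ℕ) (x : ℤ → A) (i : ℤ) :
    tau^[m + 1] x i = tau^[m] x i + tau^[m] x (i + 1) := by
  rw [Function.iterate_succ_apply', tau]

theorem measurable_tau {A : Type*} [Add A] [MeasurableSpace A] [MeasurableAdd₂ A] :
    Measurable (tau : (ℤ → A) → ℤ → A) :=
  measurable_pi_lambda _ fun i => (measurable_pi_apply i).add (measurable_pi_apply (i + 1))

theorem measurable_tau_iterate_of_path {Ω A : Type*} [MeasurableSpace Ω] [AddGroup A]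
    [MeasurableSpace A] [MeasurableAdd₂ A] [MeasurableNeg A] {c : ℕ → ℤ}
    (hc : IsExhaustingPath c) {X : Ω → ℤ → A} {n : ℕ}
    (hX : ∀ m ≥ n, Measurable fun ω => tau^[m] (X ω) (c m)) :
    Measurable fun ω => tau^[n] (X ω) := by
  refine measurable_pi_lambda _ <|
    hc.forall_site (P := fun m i => Measurable fun ω => tau^[m] (X ω) i) hX fun m i hsum => ?_
  simp only [tau_iterate_succ_apply] at hsum
  exact measurable_iff_of_measurable_add hsum

theorem stmt6_general {A : Type*} [AddGroup A] [mA : MeasurableSpace A] [MeasurableAdd₂ A]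
    [MeasurableNeg A] {c : ℕ → ℤ} (hc : IsExhaustingPath c) (n : ℕ) :
    (⨆ m : ℕ, ⨆ _ : n ≤ m, mA.comap fun ω : ℤ → A => tau^[m] ω (c m))
      = MeasurableSpace.pi.comap fun ω : ℤ → A => tau^[n] ω := by
  refine le_antisymm (iSup₂_le fun m hnm => ?_) ?_
  · calc mA.comap (fun ω : ℤ → A => tau^[m] ω (c m))
        = (mA.comap fun x : ℤ → A => x (c m)).comap tau^[m] := by
          rw [MeasurableSpace.comap_comp, Function.comp_def]
      _ ≤ MeasurableSpace.pi.comap tau^[m] :=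
        MeasurableSpace.comap_mono (measurable_pi_apply _).comap_le
      _ ≤ MeasurableSpace.pi.comap tau^[n] :=
        antitone_comap_iterate_of_measurable measurable_tau hnm
  · let S := ⨆ m : ℕ, ⨆ _ : n ≤ m, mA.comap fun ω : ℤ → A => tau^[m] ω (c m)
    have observed : ∀ m ≥ n, Measurable[S] fun ω : ℤ → A => tau^[m] ω (c m) := fun m hnm =>
      measurable_iff_comap_le.2 (le_iSup₂_of_le m hnm le_rfl)
    exact (@measurable_tau_iterate_of_path _ _ S _ _ _ _ _ hc id n observed).comap_le

/-- With `i_m := -⌊m/2⌋`, for every `n ∈ ℕ` the σ-algebra on `A^ℤ` generated by the family of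
maps `ω ↦ (τ^m ω)(i_m)`, `m ≥ n`, equals the σ-algebra generated by the single map
`ω ↦ τ^n ω`. -/
theorem stmt6 {A : Type*} [Fintype A] [AddCommGroup A] [MeasurableSpace A]
    [MeasurableSingletonClass A] (hA : 1 < Fintype.card A) (n : ℕ) :
    (⨆ m : ℕ, ⨆ _ : n ≤ m,
        MeasurableSpace.comap (fun ω : ℤ → A => (tau^[m] ω) (-((m : ℤ) / 2)))
          (inferInstance : MeasurableSpace A))
      = MeasurableSpace.comap (fun ω : ℤ → A => tau^[n] ω)
          (inferInstance : MeasurableSpace (ℤ → A)) :=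
  stmt6_general isExhaustingPath_neg_half n
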